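/- arXiv:1110.1963 — 2 statements merged into one kernel-verified Lean document; each statement's English description precedes it below -/
import Mathlib

section
/- Let s be the number of square-free monomials of degree d+1 lying in I \ J. If r > s and s ≤ 1, then depth_S (I/J) = d. -/
open MvPolynomial

/-- The square-free monomial `∏ i ∈ T, X i` associated to a set `T` of variables. -/
noncomputable def sqMon (K : Type) [Field K] {n : ℕ} (T : Finset (Fin n)) :
    MvPolynomial (Fin n) K :=
  ∏ i ∈ T, X i

/-- `GenBySqMonOfDeg K P I` means: `I` is generated by square-free monomials whose
degrees satisfy the predicate `P`. -/
def GenBySqMonOfDeg (K : Type) [Field K] {n : ℕ} (P : ℕ → Prop)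
    (I : Ideal (MvPolynomial (Fin n) K)) : Prop :=
  ∃ G : Set (Finset (Fin n)), (∀ T ∈ G, P T.card) ∧ I = Ideal.span (sqMon K '' G)

/-- `rho K d I` : the number of square-free monomials of degree `d` belonging to `I`. -/
noncomputable def rho (K : Type) [Field K] {n : ℕ} (d : ℕ)
    (I : Ideal (MvPolynomial (Fin n) K)) : ℕ :=
  Set.ncard {T : Finset (Fin n) | T.card = d ∧ sqMon K T ∈ I}

/-- The maximal graded ideal `(x_1, …, x_n)` of `K[x_1, …, x_n]`. -/
noncomputable def maxGraded (K : Type) [Field K] (n : ℕ) :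
    Ideal (MvPolynomial (Fin n) K) :=
  Ideal.span (Set.range (X : Fin n → MvPolynomial (Fin n) K))

/-- The depth of the module `M` with respect to the ideal `I` : the supremum of the
lengths of `M`-regular sequences consisting of elements of `I`. -/
noncomputable def moduleDepth {R : Type} [CommRing R] (I : Ideal R)
    (M : Type) [AddCommGroup M] [Module R M] : ℕ∞ :=
  sSup {k : ℕ∞ | ∃ rs : List R, k = (rs.length : ℕ∞) ∧ (∀ r ∈ rs, r ∈ I) ∧
    RingTheory.Sequence.IsRegular M rs}

/-- The `R`-module `I/J` (more precisely `I/(I ∩ J)`, which is `I/J` when `J ≤ I`). -/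
noncomputable abbrev idealQuot {R : Type} [CommRing R] (I J : Ideal R) : Type :=
  ↥I ⧸ (Submodule.comap I.subtype (J : Submodule R R))

section ExtPart
open CategoryTheory Abelian Pointwise

/-- Vanishing of `Ext^i(R/m, M)`. -/
def EZ {R : Type} [CommRing R] (m : Ideal R) (M : Type) [AddCommGroup M] [Module R M]
    (i : ℕ) : Prop :=
  Subsingleton (Ext (ModuleCat.of R (R ⧸ m)) (ModuleCat.of R M) i)

variable {R : Type} [CommRing R] {m : Ideal R}
  {A B C : Type} [AddCommGroup A] [Module R A] [AddCommGroup B] [Module R B]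
  [AddCommGroup C] [Module R C]

lemma ses_shortExact {f : A →ₗ[R] B} {g : B →ₗ[R] C} (hf : Function.Injective f)
    (hg : Function.Surjective g) (h : Function.Exact f g) :
    (ModuleCat.shortComplexOfCompEqZero f g h.linearMap_comp_eq_zero).ShortExact where
  exact := ModuleCat.shortComplex_exact _ h
  mono_f := by
    simpa [ModuleCat.mono_iff_injective] using hf
  epi_g := by
    simpa [ModuleCat.epi_iff_surjective] using hg

lemma ez_mid {f : A →ₗ[R] B} {g : B →ₗ[R] C} (hf : Function.Injective f)
    (hg : Function.Surjective g) (h : Function.Exact f g) {i : ℕ}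
    (hA : EZ m A i) (hC : EZ m C i) : EZ m B i := by
  have hS := ses_shortExact hf hg h
  refine subsingleton_of_forall_eq 0 fun x => ?_
  obtain ⟨y, hy⟩ := Ext.covariant_sequence_exact₂ _ hS x (hC.elim _ _)
  rw [← hy, hA.elim y 0]
  simp

lemma ez_right {f : A →ₗ[R] B} {g : B →ₗ[R] C} (hf : Function.Injective f)
    (hg : Function.Surjective g) (h : Function.Exact f g) {i : ℕ}
    (hB : EZ m B i) (hA : EZ m A (i + 1)) : EZ m C i := by
  have hS := ses_shortExact hf hg h
  refine subsingleton_of_forall_eq 0 fun x => ?_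
  obtain ⟨y, hy⟩ := Ext.covariant_sequence_exact₃ _ hS x rfl (hA.elim _ _)
  rw [← hy, hB.elim y 0]
  simp

lemma ez_left {f : A →ₗ[R] B} {g : B →ₗ[R] C} (hf : Function.Injective f)
    (hg : Function.Surjective g) (h : Function.Exact f g) {i : ℕ}
    (hC : EZ m C i) (hB : EZ m B (i + 1)) : EZ m A (i + 1) := by
  have hS := ses_shortExact hf hg h
  refine subsingleton_of_forall_eq 0 fun x => ?_
  obtain ⟨y, hy⟩ := Ext.covariant_sequence_exact₁ _ hS x (hB.elim _ _) rfl
  rw [← hy, hC.elim y 0]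
  simp

lemma ez_subsingleton [Subsingleton A] (i : ℕ) : EZ m A i := by
  have : Limits.IsZero (ModuleCat.of R A) := ModuleCat.isZero_of_subsingleton _
  refine subsingleton_of_forall_eq 0 fun x => ?_
  rw [← x.comp_mk₀_id, this.eq_of_src (𝟙 _) 0]
  simp

lemma ez_equiv (e : A ≃ₗ[R] B) {i : ℕ} (h : EZ m A i) : EZ m B i := by
  have : Function.Exact (e : A →ₗ[R] B) (0 : B →ₗ[R] PUnit) := by
    intro x
    simp
  exact ez_mid e.injective (fun x => ⟨0, rfl⟩) this h (ez_subsingleton i)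

lemma ez_zero_of_regular {x : R} (hx : x ∈ m) (hreg : IsSMulRegular A x) : EZ m A 0 := by
  have : Subsingleton ((R ⧸ m) →ₗ[R] A) := by
    refine subsingleton_of_forall_eq 0 fun f => LinearMap.ext fun y => hreg ?_
    obtain ⟨y, rfl⟩ := Ideal.Quotient.mk_surjective y
    change x • f _ = x • (0 : A)
    rw [← map_smul, smul_zero, ← map_zero f]
    congr 1
    exact Ideal.Quotient.eq_zero_iff_mem.mpr (m.mul_mem_right y hx)
  exact (Ext.addEquiv₀.trans ModuleCat.homAddEquiv).subsingleton

lemma ez_smul {x : R} (hx : x ∈ m) (hreg : IsSMulRegular A x) {g : A →ₗ[R] C}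
    (hg : Function.Surjective g) (h : Function.Exact (LinearMap.lsmul R A x) g) {i : ℕ}
    (hC : EZ m C i) : EZ m A (i + 1) := by
  have hS := ses_shortExact (f := LinearMap.lsmul R A x) hreg hg h
  refine subsingleton_of_forall_eq 0 fun y => ?_
  have hk : x ∈ Module.annihilator R (ModuleCat.of R (R ⧸ m)) := by
    change x ∈ Module.annihilator R (R ⧸ m)
    rwa [Ideal.annihilator_quotient]
  have h0 := Ext.postcomp_smul_id_eq_zero_of_mem_annihilator (M := ModuleCat.of R A) hk (i + 1)
  have h1 := DFunLike.congr_fun (congrArg AddCommGrpCat.Hom.hom h0) y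
  obtain ⟨z, hz⟩ := Ext.covariant_sequence_exact₁ _ hS y h1 rfl
  rw [← hz, hC.elim z 0]
  simp

lemma not_ez_self (hm : m ≠ ⊤) : ¬ EZ m (R ⧸ m) 0 := by
  intro h
  have : Subsingleton ((R ⧸ m) →ₗ[R] (R ⧸ m)) :=
    ((Ext.addEquiv₀.trans ModuleCat.homAddEquiv).symm.subsingleton_congr.mpr h)
  have h1 : (LinearMap.id : (R ⧸ m) →ₗ[R] (R ⧸ m)) = 0 := this.elim _ _
  have h2 := LinearMap.congr_fun h1 (Ideal.Quotient.mk m 1)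
  simp at h2
  exact hm ((Ideal.eq_top_iff_one m).mpr (Ideal.Quotient.eq_zero_iff_mem.mp (by simpa using h2)))

end ExtPart

section IdealPart

variable {R : Type} [CommRing R]

lemma idealQuot_iso {X : Type} [AddCommGroup X] [Module R X] (h : X →ₗ[R] R)
    (N : Submodule R X) {L J : Ideal R} (hN : ∀ x, x ∈ N ↔ h x ∈ J) (hL : ∀ x, h x ∈ L)
    (hs : ∀ l ∈ L, ∃ x, l - h x ∈ J) : Nonempty ((X ⧸ N) ≃ₗ[R] idealQuot L J) := by
  let ψ : X →ₗ[R] idealQuot L J := (Submodule.mkQ _).comp (h.codRestrict L hL)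
  have hk : N = LinearMap.ker ψ := by
    ext x
    rw [hN]
    simp [ψ]
  have hsur : Function.Surjective ψ := by
    intro y
    obtain ⟨⟨l, hl⟩, rfl⟩ := Submodule.mkQ_surjective _ y
    obtain ⟨x, hx⟩ := hs l hl
    refine ⟨x, ?_⟩
    refine ((Submodule.Quotient.eq _).mpr ?_).symm
    simpa using hx
  exact ⟨(Submodule.quotEquivOfEq _ _ hk).trans (ψ.quotKerEquivOfSurjective hsur)⟩

lemma idealQuot_ses {J L I : Ideal R} (h1 : J ≤ L) (h2 : L ≤ I) :
    ∃ (f : idealQuot L J →ₗ[R] idealQuot I J) (g : idealQuot I J →ₗ[R] idealQuot I L),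
      Function.Injective f ∧ Function.Surjective g ∧ Function.Exact f g := by
  refine ⟨Submodule.mapQ _ _ (Submodule.inclusion h2) (fun x hx => hx),
    Submodule.mapQ _ _ LinearMap.id (fun x hx => h1 hx), ?_, ?_, ?_⟩
  · rw [injective_iff_map_eq_zero]
    intro y
    obtain ⟨x, rfl⟩ := Submodule.mkQ_surjective _ y
    intro hx
    have hx' : (x : R) ∈ J := (Submodule.Quotient.mk_eq_zero
      (Submodule.comap I.subtype J) (x := Submodule.inclusion h2 x)).mp hx
    exact (Submodule.Quotient.mk_eq_zero (Submodule.comap L.subtype J)).mpr hx'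
  · intro y
    obtain ⟨x, rfl⟩ := Submodule.mkQ_surjective _ y
    exact ⟨Submodule.mkQ _ x, rfl⟩
  · intro y
    obtain ⟨x, rfl⟩ := Submodule.mkQ_surjective _ y
    constructor
    · intro hx
      have hx' : (x : R) ∈ L := (Submodule.Quotient.mk_eq_zero
        (Submodule.comap I.subtype L) (x := x)).mp hx
      exact ⟨Submodule.mkQ _ ⟨x, hx'⟩, rfl⟩
    · rintro ⟨z, hz⟩
      obtain ⟨w, rfl⟩ := Submodule.mkQ_surjective _ z
      rw [← hz]
      exact (Submodule.Quotient.mk_eq_zero (Submodule.comap I.subtype L)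
        (x := Submodule.inclusion h2 w)).mpr w.2

end IdealPart

section MonPart

variable {K : Type} [Field K] {n : ℕ}

/-- The linear prime generated by the variables outside `U`. -/
noncomputable def linPrime (K : Type) [Field K] {n : ℕ} (U : Finset (Fin n)) :
    Ideal (MvPolynomial (Fin n) K) :=
  Ideal.span (X '' {j | j ∉ U})

/-- The algebra map killing the variables outside `U`. -/
noncomputable def killOut (K : Type) [Field K] {n : ℕ} (U : Finset (Fin n)) :
    MvPolynomial (Fin n) K →ₐ[K] MvPolynomial (Fin n) K :=
  aeval (fun j => if j ∈ U then X j else 0)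

lemma X_mem_linPrime {U : Finset (Fin n)} {j : Fin n} (h : j ∉ U) :
    (X j : MvPolynomial (Fin n) K) ∈ linPrime K U :=
  Ideal.subset_span ⟨j, h, rfl⟩

lemma killOut_X_mem {U : Finset (Fin n)} {j : Fin n} (h : j ∈ U) :
    killOut K U (X j) = X j := by simp [killOut, h]

lemma killOut_X_not_mem {U : Finset (Fin n)} {j : Fin n} (h : j ∉ U) :
    killOut K U (X j) = 0 := by simp [killOut, h]

lemma sub_killOut_mem (U : Finset (Fin n)) (g : MvPolynomial (Fin n) K) :
    g - killOut K U g ∈ linPrime K U := by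
  induction g using MvPolynomial.induction_on with
  | C a => simp [killOut]
  | add p q hp hq =>
    rw [map_add, add_sub_add_comm]
    exact add_mem hp hq
  | mul_X p j hp =>
    by_cases hj : j ∈ U
    · rw [map_mul, killOut_X_mem hj, ← sub_mul]
      exact Ideal.mul_mem_right _ _ hp
    · rw [map_mul, killOut_X_not_mem hj, mul_zero, sub_zero]
      exact Ideal.mul_mem_left _ _ (X_mem_linPrime hj)

lemma mem_linPrime_iff (U : Finset (Fin n)) (g : MvPolynomial (Fin n) K) :
    g ∈ linPrime K U ↔ killOut K U g = 0 := by
  constructor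
  · intro h
    have : linPrime K U ≤ RingHom.ker (killOut K U) := by
      rw [linPrime, Ideal.span_le]
      rintro _ ⟨j, hj, rfl⟩
      exact killOut_X_not_mem hj
    exact this h
  · intro h
    have := sub_killOut_mem (K := K) U g
    rwa [h, sub_zero] at this

lemma linPrime_insert {T : Finset (Fin n)} {i : Fin n} :
    linPrime K T ≤ linPrime K (insert i T) ⊔ Ideal.span {X i} := by
  rw [linPrime, Ideal.span_le]
  rintro _ ⟨j, hj, rfl⟩
  by_cases h : j = i
  · subst h
    exact Ideal.mem_sup_right (Ideal.subset_span rfl)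
  · exact Ideal.mem_sup_left (X_mem_linPrime (by simp [h]; exact hj))

lemma linPrime_anti {T U : Finset (Fin n)} (h : T ⊆ U) : linPrime K U ≤ linPrime K T :=
  Ideal.span_mono (Set.image_mono fun _ hj hj' => hj (h hj'))

lemma linPrime_empty : linPrime K (∅ : Finset (Fin n)) = maxGraded K n := by
  simp [linPrime, maxGraded]

lemma linPrime_le_max (U : Finset (Fin n)) : linPrime K U ≤ maxGraded K n :=
  linPrime_empty (K := K) (n := n) ▸ linPrime_anti (Finset.empty_subset U)

lemma maxGraded_ne_top : maxGraded K n ≠ ⊤ := by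
  rw [← linPrime_empty, Ne, Ideal.eq_top_iff_one, mem_linPrime_iff]
  simp

lemma X_mem_max (j : Fin n) : (X j : MvPolynomial (Fin n) K) ∈ maxGraded K n :=
  Ideal.subset_span ⟨j, rfl⟩

lemma lin_step {T : Finset (Fin n)} {i : Fin n} (hi : i ∉ T) :
    IsSMulRegular (MvPolynomial (Fin n) K ⧸ linPrime K (insert i T))
      (X i : MvPolynomial (Fin n) K) ∧
    ∃ g : (MvPolynomial (Fin n) K ⧸ linPrime K (insert i T)) →ₗ[MvPolynomial (Fin n) K]
        (MvPolynomial (Fin n) K ⧸ linPrime K T),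
      Function.Surjective g ∧ Function.Exact (LinearMap.lsmul (MvPolynomial (Fin n) K)
        (MvPolynomial (Fin n) K ⧸ linPrime K (insert i T)) (X i)) g := by
  constructor
  · rw [isSMulRegular_iff_right_eq_zero_of_smul]
    intro y hy
    obtain ⟨g, rfl⟩ := Ideal.Quotient.mk_surjective y
    have h1 : (X i : MvPolynomial (Fin n) K) * g ∈ linPrime K (insert i T) :=
      Ideal.Quotient.eq_zero_iff_mem.mp hy
    rw [mem_linPrime_iff, map_mul, killOut_X_mem (by simp)] at h1
    rw [Ideal.Quotient.eq_zero_iff_mem, mem_linPrime_iff]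
    exact (mul_eq_zero.mp h1).resolve_left (X_ne_zero i)
  · refine ⟨Submodule.mapQ _ _ LinearMap.id
      (fun x hx => linPrime_anti (Finset.subset_insert i T) hx), ?_, ?_⟩
    · intro y
      obtain ⟨x, rfl⟩ := Submodule.mkQ_surjective _ y
      exact ⟨Submodule.mkQ _ x, rfl⟩
    · intro y
      obtain ⟨g, rfl⟩ := Ideal.Quotient.mk_surjective y
      constructor
      · intro h
        have h1 : g ∈ linPrime K T := Ideal.Quotient.eq_zero_iff_mem.mp h
        obtain ⟨a, ha, b, hb, rfl⟩ := Submodule.mem_sup.mp (linPrime_insert (i := i) h1)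
        obtain ⟨c, rfl⟩ := Ideal.mem_span_singleton'.mp hb
        refine ⟨Ideal.Quotient.mk _ c, ?_⟩
        refine Ideal.Quotient.eq.mpr ?_
        simp only [smul_eq_mul]
        have : X i * c - (a + c * X i) = -a := by ring
        rw [this]
        exact neg_mem ha
      · rintro ⟨z, hz⟩
        obtain ⟨c, rfl⟩ := Ideal.Quotient.mk_surjective z
        rw [← hz]
        exact Ideal.Quotient.eq_zero_iff_mem.mpr
          (Ideal.mul_mem_right _ _ (X_mem_linPrime hi))

lemma ez_lin (T : Finset (Fin n)) :
    (∀ i < T.card, EZ (maxGraded K n) (MvPolynomial (Fin n) K ⧸ linPrime K T) i) ∧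
    ¬ EZ (maxGraded K n) (MvPolynomial (Fin n) K ⧸ linPrime K T) T.card := by
  induction T using Finset.induction_on with
  | empty =>
    refine ⟨by simp, ?_⟩
    rw [linPrime_empty]
    exact not_ez_self maxGraded_ne_top
  | insert a T ha ih =>
    obtain ⟨hreg, g, hg, hex⟩ := lin_step (K := K) ha
    rw [Finset.card_insert_of_notMem ha]
    have key : ∀ i < T.card + 1,
        EZ (maxGraded K n) (MvPolynomial (Fin n) K ⧸ linPrime K (insert a T)) i := by
      intro i hi
      cases i with
      | zero => exact ez_zero_of_regular (X_mem_max a) hreg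
      | succ i => exact ez_smul (X_mem_max a) hreg hg hex (ih.1 i (by omega))
    refine ⟨key, fun h => ih.2 ?_⟩
    exact ez_right (f := LinearMap.lsmul _ _ (X a)) hreg hg hex (key _ (by omega)) h

/-- The squarefree monomial ideal generated by `G`. -/
noncomputable def SI (K : Type) [Field K] {n : ℕ} (G : Set (Finset (Fin n))) :
    Ideal (MvPolynomial (Fin n) K) := Ideal.span (sqMon K '' G)

lemma SI_mono {G H : Set (Finset (Fin n))} (h : G ⊆ H) : SI K G ≤ SI K H :=
  Ideal.span_mono (Set.image_mono h)

lemma mem_SI {G : Set (Finset (Fin n))} {T : Finset (Fin n)} (h : T ∈ G) :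
    sqMon K T ∈ SI K G := Ideal.subset_span ⟨T, h, rfl⟩

lemma SI_le {G : Set (Finset (Fin n))} {I : Ideal (MvPolynomial (Fin n) K)}
    (h : ∀ T ∈ G, sqMon K T ∈ I) : SI K G ≤ I := by
  rw [SI, Ideal.span_le]
  rintro _ ⟨T, hT, rfl⟩
  exact h T hT

lemma sqMon_insert {T : Finset (Fin n)} {j : Fin n} (h : j ∉ T) :
    sqMon K (insert j T) = X j * sqMon K T := Finset.prod_insert h

lemma sqMon_ne_zero (T : Finset (Fin n)) : sqMon K T ≠ 0 :=
  Finset.prod_ne_zero_iff.mpr fun i _ => X_ne_zero i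

lemma killOut_sqMon {T U : Finset (Fin n)} (h : T ⊆ U) : killOut K U (sqMon K T) = sqMon K T := by
  rw [sqMon, map_prod]
  exact Finset.prod_congr rfl fun i hi => killOut_X_mem (h hi)

lemma killOut_sqMon_eq_zero {T U : Finset (Fin n)} (h : ¬ T ⊆ U) :
    killOut K U (sqMon K T) = 0 := by
  obtain ⟨j, hj, hj'⟩ := Finset.not_subset.mp h
  rw [sqMon, map_prod]
  exact Finset.prod_eq_zero hj (killOut_X_not_mem hj')

lemma killOut_SI {G : Set (Finset (Fin n))} {U : Finset (Fin n)} (hU : sqMon K U ∉ SI K G)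
    {g : MvPolynomial (Fin n) K} (hg : g ∈ SI K G) : killOut K U g = 0 := by
  rw [← mem_linPrime_iff]
  refine SI_le (fun T hT => ?_) hg
  rw [mem_linPrime_iff]
  refine killOut_sqMon_eq_zero fun hTU => hU ?_
  exact Ideal.mem_of_dvd _ (Finset.prod_dvd_prod_of_subset T U _ hTU) (mem_SI hT)

lemma mul_mem_SI {G : Set (Finset (Fin n))} {U : Finset (Fin n)} {u : MvPolynomial (Fin n) K}
    (h : ∀ j, j ∉ U → X j * u ∈ SI K G) {g : MvPolynomial (Fin n) K}
    (hg : g ∈ linPrime K U) : g * u ∈ SI K G := by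
  have : linPrime K U ≤ Submodule.comap (LinearMap.mulRight (MvPolynomial (Fin n) K) u)
      (SI K G) := by
    rw [linPrime, Ideal.span_le]
    rintro _ ⟨j, hj, rfl⟩
    exact h j hj
  exact this hg

lemma SI_insert (G : Set (Finset (Fin n))) (T : Finset (Fin n)) :
    SI K (insert T G) = Ideal.span {sqMon K T} ⊔ SI K G := by
  rw [SI, Set.image_insert_eq, Ideal.span_insert, SI]

lemma add_one_iso {G : Set (Finset (Fin n))} {T U : Finset (Fin n)} (hTU : T ⊆ U)
    (hU : sqMon K U ∉ SI K G) (h : ∀ j, j ∉ U → X j * sqMon K T ∈ SI K G) :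
    Nonempty ((MvPolynomial (Fin n) K ⧸ linPrime K U) ≃ₗ[MvPolynomial (Fin n) K]
      idealQuot (SI K (insert T G)) (SI K G)) := by
  refine idealQuot_iso (LinearMap.mulRight (MvPolynomial (Fin n) K) (sqMon K T)) _ ?_ ?_ ?_
  · intro g
    refine ⟨fun hg => mul_mem_SI h hg, fun hg => ?_⟩
    have := killOut_SI hU hg
    rw [LinearMap.mulRight_apply, map_mul, killOut_sqMon hTU] at this
    rw [mem_linPrime_iff]
    exact (mul_eq_zero.mp this).resolve_right (sqMon_ne_zero T)
  · intro g
    exact Ideal.mul_mem_left _ _ (mem_SI (Set.mem_insert _ _))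
  · intro l hl
    rw [SI_insert] at hl
    obtain ⟨a, ha, b, hb, rfl⟩ := Submodule.mem_sup.mp hl
    obtain ⟨c, rfl⟩ := Ideal.mem_span_singleton'.mp ha
    exact ⟨c, by simpa using hb⟩

/-- At most one enlargement of `T` by a variable is outside `SI G`. -/
def StarCond (K : Type) [Field K] {n : ℕ} (G : Set (Finset (Fin n))) (T : Finset (Fin n)) : Prop :=
  ∀ j j', j ∉ T → j' ∉ T → j ≠ j' →
    sqMon K (insert j T) ∈ SI K G ∨ sqMon K (insert j' T) ∈ SI K G

lemma ez_step {G : Set (Finset (Fin n))} {T : Finset (Fin n)} (hs : StarCond K G T) (i : ℕ)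
    (hi : i < T.card) :
    EZ (maxGraded K n) (idealQuot (SI K (insert T G)) (SI K G)) i := by
  by_cases hT : sqMon K T ∈ SI K G
  · have : SI K (insert T G) ≤ SI K G := by
      rw [SI_insert, sup_le_iff, Ideal.span_singleton_le_iff_mem]
      exact ⟨hT, le_rfl⟩
    have : Subsingleton (idealQuot (SI K (insert T G)) (SI K G)) := by
      rw [Submodule.Quotient.subsingleton_iff, eq_top_iff]
      exact fun x _ => this x.2
    exact ez_subsingleton i
  · by_cases h : ∀ j, j ∉ T → sqMon K (insert j T) ∈ SI K G
    · obtain ⟨e⟩ := add_one_iso (K := K) (G := G) (T := T) (U := T) subset_rfl hT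
        (fun j hj => sqMon_insert (K := K) hj ▸ h j hj)
      exact ez_equiv e ((ez_lin T).1 i hi)
    · push Not at h
      obtain ⟨j, hj, hjn⟩ := h
      obtain ⟨e⟩ := add_one_iso (K := K) (G := G) (T := T) (U := insert j T)
        (Finset.subset_insert _ _) hjn (fun j' hj' => by
          rw [Finset.mem_insert, not_or] at hj'
          rw [← sqMon_insert hj'.2]
          exact (hs j j' hj hj'.2 (Ne.symm hj'.1)).resolve_left hjn)
      refine ez_equiv e ((ez_lin _).1 i ?_)
      rw [Finset.card_insert_of_notMem hj]
      omega

lemma ez_many (d : ℕ) (F : Finset (Finset (Fin n))) : ∀ G : Set (Finset (Fin n)),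
    (∀ T ∈ F, T.card = d) → (∀ T ∈ F, StarCond K G T) → ∀ i < d,
    EZ (maxGraded K n) (idealQuot (SI K (G ∪ F)) (SI K G)) i := by
  induction F using Finset.induction_on with
  | empty =>
    intro G _ _ i _
    have : Subsingleton (idealQuot (SI K (G ∪ (∅ : Finset (Finset (Fin n))))) (SI K G)) := by
      rw [Submodule.Quotient.subsingleton_iff, eq_top_iff]
      intro x _
      have := x.2
      simpa using this
    exact ez_subsingleton i
  | insert T F hT ih =>
    intro G hd hs i hi
    have hG : G ∪ ((insert T F : Finset (Finset (Fin n))) : Set (Finset (Fin n)))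
        = insert T G ∪ F := by
      ext x; simp; tauto
    rw [hG]
    obtain ⟨f, g, hf, hg, hex⟩ := idealQuot_ses (SI_mono (K := K) (Set.subset_insert T G))
      (SI_mono (K := K) (Set.subset_union_left (s := insert T G) (t := F)))
    refine ez_mid hf hg hex ?_ ?_
    · exact ez_step (hs T (by simp)) i (by rw [hd T (by simp)]; exact hi)
    · refine ih (insert T G) (fun U hU => hd U (by simp [hU])) (fun U hU => ?_) i hi
      intro j j' h1 h2 h3
      exact (hs U (by simp [hU]) j j' h1 h2 h3).imp
        (fun h => SI_mono (Set.subset_insert T G) h) (fun h => SI_mono (Set.subset_insert T G) h)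

lemma not_ez_pair {G : Set (Finset (Fin n))} {C : Finset (Fin n)} {p q : Fin n}
    (hpq : p ≠ q) (hp : p ∉ C) (hq : q ∉ C)
    (hb : sqMon K (insert p (insert q C)) ∉ SI K G)
    (h1 : ∀ j, j ∉ insert p (insert q C) → X j * sqMon K (insert p C) ∈ SI K G)
    (h2 : ∀ j, j ∉ insert p (insert q C) → X j * sqMon K (insert q C) ∈ SI K G) :
    ¬ EZ (maxGraded K n)
      (idealQuot (SI K (insert (insert p C) (insert (insert q C) G))) (SI K G)) (C.card + 1) := by
  intro hE
  set b := insert p (insert q C) with hbdef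
  have hCb : C ⊆ b := (Finset.subset_insert q C).trans (Finset.subset_insert p _)
  have hpb : p ∈ b := by simp [hbdef]
  have hqb : q ∈ b := by simp [hbdef]
  let E : Ideal (MvPolynomial (Fin n) K) := Ideal.span {X p, X q}
  let N : Submodule (MvPolynomial (Fin n) K) E := Submodule.comap E.subtype (linPrime K b)
  have iso : Nonempty ((E ⧸ N) ≃ₗ[MvPolynomial (Fin n) K]
      idealQuot (SI K (insert (insert p C) (insert (insert q C) G))) (SI K G)) := by
    refine idealQuot_iso ((LinearMap.mulRight (MvPolynomial (Fin n) K) (sqMon K C)).comp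
      E.subtype) N ?_ ?_ ?_
    · rintro ⟨g, hg⟩
      change g ∈ linPrime K b ↔ g * sqMon K C ∈ SI K G
      constructor
      · intro hgb
        obtain ⟨u, v, rfl⟩ := Ideal.mem_span_pair.mp hg
        rw [mem_linPrime_iff, map_add, map_mul, map_mul, killOut_X_mem hpb,
          killOut_X_mem hqb] at hgb
        have e1 : (u * X p + v * X q) * sqMon K C =
            (u - killOut K b u) * sqMon K (insert p C)
            + (v - killOut K b v) * sqMon K (insert q C) := by
          rw [sqMon_insert hp, sqMon_insert hq]
          linear_combination (sqMon K C) * hgb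
        rw [e1]
        exact add_mem (mul_mem_SI h1 (sub_killOut_mem b u)) (mul_mem_SI h2 (sub_killOut_mem b v))
      · intro hgb
        have := killOut_SI hb hgb
        rw [map_mul, killOut_sqMon hCb] at this
        rw [mem_linPrime_iff]
        exact (mul_eq_zero.mp this).resolve_right (sqMon_ne_zero C)
    · rintro ⟨g, hg⟩
      change g * sqMon K C ∈ _
      obtain ⟨u, v, rfl⟩ := Ideal.mem_span_pair.mp hg
      have e1 : (u * X p + v * X q) * sqMon K C =
            u * sqMon K (insert p C) + v * sqMon K (insert q C) := by
        rw [sqMon_insert hp, sqMon_insert hq]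
        ring
      rw [e1]
      exact add_mem (Ideal.mul_mem_left _ _ (mem_SI (by simp)))
        (Ideal.mul_mem_left _ _ (mem_SI (by simp)))
    · intro l hl
      rw [SI_insert, SI_insert] at hl
      obtain ⟨a, ha, b', hb', rfl⟩ := Submodule.mem_sup.mp hl
      obtain ⟨c, hc, e, he, rfl⟩ := Submodule.mem_sup.mp hb'
      obtain ⟨u, rfl⟩ := Ideal.mem_span_singleton'.mp ha
      obtain ⟨v, rfl⟩ := Ideal.mem_span_singleton'.mp hc
      refine ⟨⟨u * X p + v * X q, Ideal.mem_span_pair.mpr ⟨u, v, rfl⟩⟩, ?_⟩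
      change _ - (u * X p + v * X q) * sqMon K C ∈ SI K G
      have e1 : u * sqMon K (insert p C) + (v * sqMon K (insert q C) + e)
          - (u * X p + v * X q) * sqMon K C = e := by
        rw [sqMon_insert hp, sqMon_insert hq]
        ring
      rw [e1]
      exact he
  obtain ⟨e⟩ := iso
  have hEN := ez_equiv e.symm hE
  refine (ez_lin (K := K) C).2 ?_
  have hcard : C.card < b.card := by
    rw [hbdef, Finset.card_insert_of_notMem (by simp [hpq, hp]), Finset.card_insert_of_notMem hq]
    omega
  refine ez_right (A := E ⧸ N) (B := MvPolynomial (Fin n) K ⧸ linPrime K b)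
    (f := Submodule.mapQ _ _ E.subtype le_rfl)
    (g := Submodule.mapQ (linPrime K b) (linPrime K C) LinearMap.id
      (fun x hx => linPrime_anti hCb hx)) ?_ ?_ ?_
    ((ez_lin (K := K) b).1 _ hcard) hEN
  · rw [injective_iff_map_eq_zero]
    intro y
    obtain ⟨x, rfl⟩ := Submodule.mkQ_surjective _ y
    intro hx
    have hx' : (x : MvPolynomial (Fin n) K) ∈ linPrime K b :=
      Ideal.Quotient.eq_zero_iff_mem.mp hx
    exact (Submodule.Quotient.mk_eq_zero N).mpr hx'
  · intro y
    obtain ⟨x, rfl⟩ := Submodule.mkQ_surjective _ y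
    exact ⟨Submodule.mkQ _ x, rfl⟩
  · intro y
    obtain ⟨g, rfl⟩ := Ideal.Quotient.mk_surjective y
    constructor
    · intro h
      have hg : g ∈ linPrime K C := Ideal.Quotient.eq_zero_iff_mem.mp h
      have hg2 : g ∈ linPrime K b ⊔ E := by
        have hle : linPrime K C ≤ linPrime K b ⊔ E := by
          refine (linPrime_insert (i := q)).trans (sup_le ((linPrime_insert (i := p)).trans
            (sup_le le_sup_left ?_)) ?_)
          · exact le_trans (Ideal.span_mono (by simp)) le_sup_right
          · exact le_trans (Ideal.span_mono (by simp)) le_sup_right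
        exact hle hg
      obtain ⟨a, ha, c, hc, rfl⟩ := Submodule.mem_sup.mp hg2
      refine ⟨Submodule.mkQ N ⟨c, hc⟩, ?_⟩
      refine Ideal.Quotient.eq.mpr ?_
      have : c - (a + c) = -a := by ring
      change c - (a + c) ∈ _
      rw [this]
      exact neg_mem ha
    · rintro ⟨z, hz⟩
      obtain ⟨⟨c, hc⟩, rfl⟩ := Submodule.mkQ_surjective _ z
      rw [← hz]
      refine Ideal.Quotient.eq_zero_iff_mem.mpr ?_
      obtain ⟨u, v, rfl⟩ := Ideal.mem_span_pair.mp hc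
      exact add_mem (Ideal.mul_mem_left _ _ (X_mem_linPrime hp))
        (Ideal.mul_mem_left _ _ (X_mem_linPrime hq))

lemma smul_top_lt {I J : Ideal (MvPolynomial (Fin n) K)} {T : Finset (Fin n)}
    (hT : sqMon K T ∈ I)
    (hI : ∀ g ∈ I, killOut K T g ∈ Ideal.span {sqMon K T})
    (hJ : ∀ g ∈ J, killOut K T g = 0) :
    maxGraded K n • (⊤ : Submodule (MvPolynomial (Fin n) K) (idealQuot I J)) < ⊤ := by
  rw [lt_top_iff_ne_top]
  intro h
  have h1 : (Submodule.comap I.subtype J).mkQ ⟨sqMon K T, hT⟩ ∈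
      maxGraded K n • (⊤ : Submodule (MvPolynomial (Fin n) K) (idealQuot I J)) := by
    rw [h]; trivial
  have h2 : (⊤ : Submodule (MvPolynomial (Fin n) K) (idealQuot I J))
      = Submodule.map (Submodule.comap I.subtype J).mkQ ⊤ := by
    rw [Submodule.map_top, Submodule.range_mkQ]
  rw [h2, ← Submodule.map_smul''] at h1
  obtain ⟨w, hw, hwe⟩ := h1
  have h3 : (w : MvPolynomial (Fin n) K) - sqMon K T ∈ J :=
    (Submodule.Quotient.eq (Submodule.comap I.subtype J)).mp hwe
  have h4 : killOut K T (w : MvPolynomial (Fin n) K) = sqMon K T := by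
    have := hJ _ h3
    rw [map_sub, killOut_sqMon subset_rfl] at this
    exact sub_eq_zero.mp this
  have h5 : killOut K T (w : MvPolynomial (Fin n) K) ∈ maxGraded K n * Ideal.span {sqMon K T} := by
    refine Submodule.smul_induction_on (p := fun w : I =>
      killOut K T (w : MvPolynomial (Fin n) K) ∈ maxGraded K n * Ideal.span {sqMon K T}) hw ?_ ?_
    · intro r hr g _
      change killOut K T (r * g) ∈ _
      rw [map_mul]
      refine Ideal.mul_mem_mul ?_ (hI _ g.2)
      have := sub_mem hr (linPrime_le_max T (sub_killOut_mem T r))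
      rwa [sub_sub_cancel] at this
    · intro x y hx hy
      rw [Submodule.coe_add, map_add]
      exact add_mem hx hy
  rw [h4] at h5
  obtain ⟨z, hz, hze⟩ := Ideal.mem_mul_span_singleton.mp h5
  have hz1 : z = 1 := by
    have : (z - 1) * sqMon K T = 0 := by rw [sub_mul, hze]; ring
    exact sub_eq_zero.mp ((mul_eq_zero.mp this).resolve_right (sqMon_ne_zero T))
  exact maxGraded_ne_top ((Ideal.eq_top_iff_one _).mpr (hz1 ▸ hz))

lemma depth_eq {M : Type} [AddCommGroup M] [Module (MvPolynomial (Fin n) K) M]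
    [Module.Finite (MvPolynomial (Fin n) K) M] (d : ℕ)
    (hlt : maxGraded K n • (⊤ : Submodule (MvPolynomial (Fin n) K) M) < ⊤)
    (h1 : ∀ i < d, EZ (maxGraded K n) M i) (h2 : ¬ EZ (maxGraded K n) M d) :
    moduleDepth (maxGraded K n) M = d := by
  have hsupp : Module.support (MvPolynomial (Fin n) K)
      (ModuleCat.of (MvPolynomial (Fin n) K) (MvPolynomial (Fin n) K ⧸ maxGraded K n))
      = PrimeSpectrum.zeroLocus (maxGraded K n) := by
    change Module.support (MvPolynomial (Fin n) K) (MvPolynomial (Fin n) K ⧸ maxGraded K n) = _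
    rw [Module.support_eq_zeroLocus, Ideal.annihilator_quotient]
  have : Module.Finite (MvPolynomial (Fin n) K)
      (ModuleCat.of (MvPolynomial (Fin n) K) (MvPolynomial (Fin n) K ⧸ maxGraded K n)) :=
    inferInstanceAs (Module.Finite _ (MvPolynomial (Fin n) K ⧸ maxGraded K n))
  have : Module.Finite (MvPolynomial (Fin n) K) (ModuleCat.of (MvPolynomial (Fin n) K) M) :=
    inferInstanceAs (Module.Finite _ M)
  apply le_antisymm
  · refine sSup_le ?_
    rintro k ⟨rs, rfl, hmem, hreg⟩
    by_contra hlen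
    have hlen' : d < rs.length := by
      simpa using hlen
    exact h2 (ModuleCat.subsingleton_ext_of_exists_isRegular (maxGraded K n) _ hsupp.subset
      (ModuleCat.of (MvPolynomial (Fin n) K) M) hlt rs hmem hreg d hlen')
  · obtain ⟨rs, hlen, hmem, hreg⟩ := ModuleCat.exists_isRegular_of_exists_subsingleton_ext
      (maxGraded K n) d (ModuleCat.of (MvPolynomial (Fin n) K) M) hlt _ hsupp h1
    exact le_sSup ⟨rs, by rw [hlen], hmem, hreg⟩

end MonPart


lemma stmt_7_aux {K : Type} [Field K] {n : ℕ} {G : Set (Finset (Fin n))} {T : Finset (Fin n)}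
    (h : ∀ U ∈ G, T.card < U.card) : sqMon K T ∉ SI K G := by
  intro hT
  have h1 : SI K G ≤ linPrime K T := SI_le fun U hU => by
    rw [mem_linPrime_iff]
    exact killOut_sqMon_eq_zero fun hUT =>
      absurd (Finset.card_le_card hUT) (not_le.mpr (h U hU))
  have h2 := h1 hT
  rw [mem_linPrime_iff, killOut_sqMon subset_rfl] at h2
  exact sqMon_ne_zero T h2

lemma ez_contra {R : Type} [CommRing R] {m J L I : Ideal R} {d : ℕ} (h1 : J ≤ L) (h2 : L ≤ I)
    (hd : 0 < d) (hQ : ∀ i < d, EZ m (idealQuot I L) i) (hL : ¬ EZ m (idealQuot L J) d) :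
    ¬ EZ m (idealQuot I J) d := by
  intro h
  obtain ⟨f, g, hf, hg, hex⟩ := idealQuot_ses h1 h2
  obtain ⟨e, rfl⟩ : ∃ e, d = e + 1 := ⟨d - 1, by omega⟩
  exact hL (ez_left hf hg hex (hQ e (by omega)) h)

/-- Corollary 1.11. -/
theorem stmt_7 (n : ℕ) (K : Type) [Field K] (d : ℕ) (hd : 0 < d)
    (I J : Ideal (MvPolynomial (Fin n) K)) (hJ0 : J ≠ ⊥) (hJI : J < I)
    (r : ℕ) (hr : 0 < r) (f : Fin r → Finset (Fin n)) (hfinj : Function.Injective f)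
    (hfd : ∀ i, (f i).card = d)
    (hIgen : I = Ideal.span (Set.range fun i => sqMon K (f i)))
    (hJgen : GenBySqMonOfDeg K (fun k => k = d + 1) J)
    (s : ℕ)
    (hs : s = Set.ncard {T : Finset (Fin n) |
      T.card = d + 1 ∧ sqMon K T ∈ I ∧ sqMon K T ∉ J})
    (hrs : s < r) (hs1 : s ≤ 1) :
    moduleDepth (maxGraded K n) (idealQuot I J) = (d : ℕ∞) := by
  classical
  obtain ⟨G, hGd, hG⟩ := hJgen
  have hG' : J = SI K G := hG
  set F : Finset (Finset (Fin n)) := Finset.univ.image f with hF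
  have hFr : (F : Set (Finset (Fin n))) = Set.range f := by simp [hF]
  have hIF : I = SI K (F : Set (Finset (Fin n))) := by
    rw [hIgen, SI, hFr, ← Set.range_comp]; rfl
  have hI : ∀ H : Set (Finset (Fin n)), G ⊆ H → H ⊆ G ∪ F → I = SI K (H ∪ F) := by
    intro H _ hH
    apply le_antisymm
    · rw [hIF]; exact SI_mono Set.subset_union_right
    · refine SI_le fun T hT => ?_
      rcases hT with hT | hT
      · rcases hH hT with hT | hT
        · exact hJI.le (hG' ▸ mem_SI hT)
        · exact hIF ▸ mem_SI hT
      · exact hIF ▸ mem_SI hT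
  have hfI : ∀ i, sqMon K (f i) ∈ I := fun i => hIF ▸ mem_SI (by simp [hF])
  have hFd : ∀ T ∈ F, T.card = d := by
    intro T hT
    obtain ⟨i, -, rfl⟩ := Finset.mem_image.mp hT
    exact hfd i
  have hinsI : ∀ i j, j ∉ f i → sqMon K (insert j (f i)) ∈ I := fun i j hj => by
    rw [sqMon_insert hj]; exact Ideal.mul_mem_left _ _ (hfI i)
  have huniq : ∀ T U : Finset (Fin n), T.card = d + 1 → U.card = d + 1 → sqMon K T ∈ I →
      sqMon K U ∈ I → sqMon K T ∉ J → sqMon K U ∉ J → T = U := by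
    intro T U h1 h2 h3 h4 h5 h6
    rw [hs] at hs1
    exact (Set.ncard_le_one (Set.toFinite _)).mp hs1 T ⟨h1, h3, h5⟩ U ⟨h2, h4, h6⟩
  have hcard : ∀ i j, j ∉ f i → (insert j (f i)).card = d + 1 := fun i j hj => by
    rw [Finset.card_insert_of_notMem hj, hfd]
  have hstar : ∀ i, StarCond K G (f i) := by
    intro i j j' hj hj' hne
    rw [← hG']
    by_contra hcon
    push Not at hcon
    have := huniq _ _ (hcard i j hj) (hcard i j' hj') (hinsI i j hj) (hinsI i j' hj')
      hcon.1 hcon.2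
    have hmem : j ∈ insert j' (f i) := this ▸ Finset.mem_insert_self _ _
    rcases Finset.mem_insert.mp hmem with h | h
    · exact hne h
    · exact hj h
  have hvan : ∀ H : Set (Finset (Fin n)), G ⊆ H → H ⊆ G ∪ F → ∀ i < d,
      EZ (maxGraded K n) (idealQuot I (SI K H)) i := by
    intro H h1 h2
    rw [hI H h1 h2]
    refine ez_many d F H hFd ?_
    intro T hT
    obtain ⟨i, -, rfl⟩ := Finset.mem_image.mp hT
    intro j j' hj hj' hne
    exact (hstar i j j' hj hj' hne).imp (fun h => SI_mono h1 h) (fun h => SI_mono h1 h)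
  have hHI : ∀ H : Set (Finset (Fin n)), G ⊆ H → H ⊆ G ∪ F → SI K H ≤ I := by
    intro H h1 h2
    rw [hI H h1 h2]
    exact SI_mono Set.subset_union_left
  have hfF : ∀ i, f i ∈ G ∪ (F : Set (Finset (Fin n))) := fun i => Or.inr (by simp [hF])
  have hfG : ∀ i, sqMon K (f i) ∉ SI K G := fun i =>
    stmt_7_aux fun U hU => by rw [hGd U hU, hfd]; omega
  refine depth_eq d ?_ ?_ ?_
  · refine smul_top_lt (hfI ⟨0, hr⟩) ?_ ?_
    · intro g hg
      have : I ≤ Ideal.comap (killOut K (f ⟨0, hr⟩)) (Ideal.span {sqMon K (f ⟨0, hr⟩)}) := by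
        rw [hIF]
        refine SI_le fun T hT => ?_
        rw [Ideal.mem_comap]
        by_cases h : T ⊆ f ⟨0, hr⟩
        · have : T = f ⟨0, hr⟩ := Finset.eq_of_subset_of_card_le h
            (by rw [hfd, hFd T hT])
          rw [this, killOut_sqMon subset_rfl]
          exact Ideal.mem_span_singleton_self _
        · rw [killOut_sqMon_eq_zero h]
          exact zero_mem _
      exact this hg
    · intro g hg
      exact killOut_SI (hfG _) (hG' ▸ hg)
  · rw [hG']
    exact hvan G subset_rfl Set.subset_union_left
  · rw [hG']
    by_cases hc : ∃ i, ∀ j, j ∉ f i → sqMon K (insert j (f i)) ∈ SI K G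
    · obtain ⟨i, hi⟩ := hc
      have hsub : insert (f i) G ⊆ G ∪ (F : Set (Finset (Fin n))) :=
        Set.insert_subset (hfF i) Set.subset_union_left
      refine ez_contra (SI_mono (Set.subset_insert (f i) G))
        (hHI _ (Set.subset_insert _ _) hsub) hd (hvan _ (Set.subset_insert _ _) hsub) ?_
      intro hE
      obtain ⟨e⟩ := add_one_iso (K := K) (G := G) (T := f i) (U := f i) subset_rfl (hfG i)
        (fun j hj => sqMon_insert (K := K) hj ▸ hi j hj)
      have := ez_equiv e.symm hE
      rw [← hfd i] at this
      exact (ez_lin (f i)).2 this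
    · push Not at hc
      have hr1 : 1 < r := by
        obtain ⟨j, hj, hjn⟩ := hc ⟨0, hr⟩
        have : 0 < s := by
          rw [hs, Set.ncard_pos (Set.toFinite _)]
          exact ⟨_, hcard _ j hj, hinsI _ j hj, hG' ▸ hjn⟩
        omega
      obtain ⟨q, hq, hqn⟩ := hc ⟨0, hr⟩
      obtain ⟨p, hp, hpn⟩ := hc ⟨1, hr1⟩
      have hne : f ⟨0, hr⟩ ≠ f ⟨1, hr1⟩ := fun h => by
        have := hfinj h
        simp at this
      generalize hA : f ⟨0, hr⟩ = A at *
      generalize hB : f ⟨1, hr1⟩ = B at *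
      have hAB : insert q A = insert p B := by
        subst hA hB
        exact huniq _ _ (hcard _ _ hq) (hcard _ _ hp) (hinsI _ _ hq) (hinsI _ _ hp)
          (hG' ▸ hqn) (hG' ▸ hpn)
      have hpq : p ≠ q := by
        rintro rfl
        apply hne
        rw [← Finset.erase_insert hq, hAB, Finset.erase_insert hp]
      have hpA : p ∈ A := by
        have : p ∈ insert q A := hAB ▸ Finset.mem_insert_self _ _
        exact (Finset.mem_insert.mp this).resolve_left hpq
      have hAC : A = insert p (A.erase p) := (Finset.insert_erase hpA).symm
      have hBC : B = insert q (A.erase p) := by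
        rw [← Finset.erase_insert hp, ← hAB, Finset.erase_insert_of_ne hpq.symm]
      have hqC : q ∉ A.erase p := fun h => hq (Finset.mem_of_mem_erase h)
      have hpC : p ∉ A.erase p := by simp
      have hb : insert p (insert q (A.erase p)) = insert p B := by rw [← hBC]
      have hsub0 : G ⊆ insert A (insert B G) :=
        (Set.subset_insert _ _).trans (Set.subset_insert _ _)
      have hsub : insert A (insert B G) ⊆ G ∪ (F : Set (Finset (Fin n))) :=
        Set.insert_subset (hA ▸ hfF _) (Set.insert_subset (hB ▸ hfF _) Set.subset_union_left)
      refine ez_contra (SI_mono hsub0) (hHI _ hsub0 hsub) hd (hvan _ hsub0 hsub) ?_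
      have hdc : (A.erase p).card + 1 = d := by
        rw [Finset.card_erase_add_one hpA, ← hA, hfd]
      have key := not_ez_pair (K := K) (G := G) hpq hpC hqC (by rw [hb]; exact hpn)
        (by
          rw [hb, ← hAC, ← hAB]
          intro j hj
          rw [Finset.mem_insert, not_or] at hj
          rw [← sqMon_insert hj.2]
          refine ((hA ▸ hstar ⟨0, hr⟩ : StarCond K G A) q j hq hj.2 (Ne.symm hj.1)).resolve_left hqn)
        (by
          rw [hb, ← hBC]
          intro j hj
          rw [Finset.mem_insert, not_or] at hj
          rw [← sqMon_insert hj.2]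
          refine ((hB ▸ hstar ⟨1, hr1⟩ : StarCond K G B) p j hp hj.2 (Ne.symm hj.1)).resolve_left hpn)
      rwa [← hAC, ← hBC, hdc] at key
end

section
/- Let s be the number of square-free monomials of degree d+1 lying in I \ J. If r > s and s = 2, then depth_S (I/J) = d. -/
open MvPolynomial

section Kos
open scoped Pointwise
variable {n : ℕ} {R : Type} [CommRing R] {M N : Type} [AddCommGroup M] [Module R M]
  [AddCommGroup N] [Module R N]

def sg (i : Fin n) (T : Finset (Fin n)) : ℤ := (-1) ^ (T.filter (· < i)).card

lemma sg_mul_self (i : Fin n) (T : Finset (Fin n)) : sg i T * sg i T = 1 := by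
  unfold sg; rw [← mul_pow]; simp

lemma sg_insert {i l : Fin n} {T : Finset (Fin n)} (h : l ∉ T) :
    sg i (insert l T) = if l < i then - sg i T else sg i T := by
  unfold sg
  rw [Finset.filter_insert]
  split_ifs with h1
  · rw [Finset.card_insert_of_notMem (by simp [h]), pow_succ]; ring
  · rfl

lemma sg_insert_self {i : Fin n} {T : Finset (Fin n)} :
    sg i (insert i T) = sg i T := by
  unfold sg
  rw [Finset.filter_insert]
  simp

lemma sg_anti {i l : Fin n} (hil : i ≠ l) {T : Finset (Fin n)} (hi : i ∉ T) (hl : l ∉ T) :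
    sg i (insert l T) * sg l T = - (sg l (insert i T) * sg i T) := by
  rw [sg_insert hl, sg_insert hi]
  rcases lt_or_gt_of_ne hil with h | h
  · rw [if_neg (by omega), if_pos h]; ring
  · rw [if_pos h, if_neg (by omega)]; ring

lemma sg_anti2 {i l : Fin n} (hil : i ≠ l) {T : Finset (Fin n)} (hi : i ∉ T) (hl : l ∉ T) :
    sg i (insert l T) * sg l (insert i T) = - (sg l T * sg i T) := by
  rw [sg_insert hl, sg_insert hi]
  rcases lt_or_gt_of_ne hil with h | h
  · rw [if_neg (by omega), if_pos h]; ring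
  · rw [if_pos h, if_neg (by omega)]; ring

variable (R) in
def eo (i : Fin n) : (Finset (Fin n) → M) →ₗ[R] (Finset (Fin n) → M) where
  toFun φ := fun T => if i ∈ T then sg i T • φ (T.erase i) else 0
  map_add' φ ψ := by funext T; by_cases h : i ∈ T <;> simp [h]
  map_smul' a φ := by funext T; by_cases h : i ∈ T <;> simp [h, smul_comm a]

variable (R) in
def io (i : Fin n) : (Finset (Fin n) → M) →ₗ[R] (Finset (Fin n) → M) where
  toFun φ := fun T => if i ∈ T then 0 else sg i T • φ (insert i T)
  map_add' φ ψ := by funext T; by_cases h : i ∈ T <;> simp [h]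
  map_smul' a φ := by funext T; by_cases h : i ∈ T <;> simp [h, smul_comm a]

lemma eo_apply (i : Fin n) (φ : Finset (Fin n) → M) (T) :
  eo R i φ T = if i ∈ T then sg i T • φ (T.erase i) else 0 := rfl

lemma io_apply (i : Fin n) (φ : Finset (Fin n) → M) (T) :
  io R i φ T = if i ∈ T then 0 else sg i T • φ (insert i T) := rfl

lemma eo_map (g : M →+ N) (i : Fin n) (φ : Finset (Fin n) → M) (T) :
    eo R i (fun T => g (φ T)) T = g (eo R i φ T) := by
  simp only [eo_apply]; split_ifs <;> simp

lemma io_map (g : M →+ N) (i : Fin n) (φ : Finset (Fin n) → M) (T) :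
    io R i (fun T => g (φ T)) T = g (io R i φ T) := by
  simp only [io_apply]; split_ifs <;> simp

lemma eo_io_self (i : Fin n) (φ : Finset (Fin n) → M) (T) :
    eo R i (io R i φ) T = if i ∈ T then φ T else 0 := by
  simp only [eo_apply, io_apply]
  split_ifs with h h2
  · simp at h2
  · have := sg_insert_self (i := i) (T := T.erase i)
    rw [Finset.insert_erase h] at this ⊢
    rw [← this, smul_smul, sg_mul_self, one_smul]
  · rfl

lemma io_eo_self (i : Fin n) (φ : Finset (Fin n) → M) (T) :
    io R i (eo R i φ) T = if i ∈ T then 0 else φ T := by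
  simp only [eo_apply, io_apply]
  split_ifs with h h2
  · rfl
  · rw [sg_insert_self, smul_smul, sg_mul_self, one_smul, Finset.erase_insert h]
  · simp at h2

lemma eo_eo_self (i : Fin n) (φ : Finset (Fin n) → M) :
    eo R i (eo R i φ) = 0 := by
  funext T
  simp [eo_apply]

lemma eo_eo (i l : Fin n) (φ : Finset (Fin n) → M) :
    eo R i (eo R l φ) + eo R l (eo R i φ) = 0 := by
  rcases eq_or_ne i l with rfl | hil
  · simp [eo_eo_self]
  funext T
  simp only [Pi.add_apply, eo_apply, Finset.mem_erase, Pi.zero_apply]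
  by_cases hi : i ∈ T
  · by_cases hl : l ∈ T
    · obtain ⟨U, hiU, hlU, rfl⟩ : ∃ U, i ∉ U ∧ l ∉ U ∧ T = insert i (insert l U) :=
        ⟨(T.erase i).erase l, by simp, by simp, by
          rw [Finset.insert_erase (by simp [hl, hil.symm]), Finset.insert_erase hi]⟩
      have h1 : (insert i (insert l U)).erase i = insert l U := by
        rw [Finset.erase_insert]; simp [hil, hiU]
      have h2 : (insert i (insert l U)).erase l = insert i U := by
        rw [Finset.insert_comm, Finset.erase_insert]; simp [hil.symm, hlU]
      rw [h1, h2, Finset.erase_insert hlU, Finset.erase_insert hiU]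
      simp only [hi, hl, hil, hil.symm, ne_eq, not_false_eq_true, and_self, if_true]
      rw [smul_smul, smul_smul, ← add_smul, sg_insert_self, Finset.insert_comm, sg_insert_self,
        sg_insert_self, sg_insert_self, sg_anti hil hiU hlU, neg_add_cancel, zero_smul]
    · simp [hi, hl]
  · simp [hi]

lemma eo_io (i l : Fin n) (hil : i ≠ l) (φ : Finset (Fin n) → M) :
    eo R i (io R l φ) + io R l (eo R i φ) = 0 := by
  funext T
  simp only [Pi.add_apply, eo_apply, io_apply, Finset.mem_erase, Finset.mem_insert, Pi.zero_apply]
  by_cases hl : l ∈ T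
  · simp [hl, hil.symm]
  by_cases hi : i ∈ T
  · obtain ⟨U, hiU, hlU, rfl⟩ : ∃ U, i ∉ U ∧ l ∉ U ∧ T = insert i U :=
      ⟨T.erase i, by simp, by simp [hl], by rw [Finset.insert_erase hi]⟩
    have h2 : (insert l (insert i U)).erase i = insert l U := by
        rw [Finset.insert_comm, Finset.erase_insert]; simp [hil, hiU]
    rw [h2, Finset.erase_insert hiU]
    simp only [hi, hl, or_true, and_false, if_true, if_false]
    rw [smul_smul, smul_smul, ← add_smul, sg_insert_self, Finset.insert_comm, sg_insert_self,
      mul_comm (sg l (insert i U)), sg_anti2 hil hiU hlU, mul_comm (sg l U), add_neg_cancel,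
      zero_smul]
  · simp [hi, hl, hil]

def dk (x : Fin n → R) : (Finset (Fin n) → M) →ₗ[R] (Finset (Fin n) → M) :=
  ∑ i, x i • eo R i

lemma dk_eq (x : Fin n → R) (φ : Finset (Fin n) → M) : dk x φ = ∑ i, x i • eo R i φ := by
  simp [dk]

lemma dk_apply (x : Fin n → R) (φ : Finset (Fin n) → M) (T) :
    dk x φ T = ∑ i, x i • eo R i φ T := by
  simp [dk]

lemma dk_map (x : Fin n → R) (g : M →ₗ[R] N) (φ : Finset (Fin n) → M) (T) :
    dk x (fun T => g (φ T)) T = g (dk x φ T) := by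
  simp only [dk_apply, map_sum, map_smul]
  exact Finset.sum_congr rfl fun i _ => congrArg (x i • ·) (eo_map (R := R) g.toAddMonoidHom i φ T)

lemma dk_dk (x : Fin n → R) (φ : Finset (Fin n) → M) : dk x (dk x φ) = 0 := by
  rw [dk_eq x (dk x φ)]
  simp only [dk_eq x φ, map_sum, map_smul, Finset.smul_sum]
  rw [← Finset.sum_product' Finset.univ Finset.univ
    (fun i l => x i • x l • eo R i (eo R l φ))]
  refine Finset.sum_involution (fun a _ => (a.2, a.1)) ?_ ?_ (by simp) (by simp)
  · rintro ⟨i, l⟩ _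
    simp only
    rw [smul_comm (x l), ← smul_add, ← smul_add, eo_eo, smul_zero, smul_zero]
  · rintro ⟨i, l⟩ _ h h2
    obtain rfl : l = i := by simpa using congrArg Prod.fst h2
    simp [eo_eo_self] at h

lemma dk_io (x : Fin n → R) (j : Fin n) (φ : Finset (Fin n) → M) :
    dk x (io R j φ) + io R j (dk x φ) = x j • φ := by
  simp only [dk_eq, map_sum, map_smul]
  rw [← Finset.sum_add_distrib, Finset.sum_eq_single j]
  · rw [← smul_add]; congr 1
    funext T; simp only [Pi.add_apply, eo_io_self, io_eo_self]; split_ifs <;> simp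
  · intro l _ h; rw [← smul_add, eo_io _ _ h, smul_zero]
  · simp

def Sup (k : ℕ) (φ : Finset (Fin n) → M) : Prop := ∀ T, T.card ≠ k → φ T = 0

lemma Sup.dk {k : ℕ} {φ : Finset (Fin n) → M} (h : Sup k φ) (x : Fin n → R) :
    Sup (k+1) (dk x φ) := by
  intro T hT
  rw [dk_apply]
  refine Finset.sum_eq_zero fun i _ => ?_
  rw [eo_apply]
  split_ifs with hi
  · rw [h, smul_zero, smul_zero]
    rw [Finset.card_erase_of_mem hi]
    have := Finset.card_pos.2 ⟨i, hi⟩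
    omega
  · simp

lemma Sup.io {k : ℕ} {φ : Finset (Fin n) → M} (h : Sup k φ) (j : Fin n) (T)
    (hT : T.card + 1 ≠ k) : io R j φ T = 0 := by
  rw [io_apply]
  split_ifs with hi
  · rfl
  · rw [h, smul_zero]
    rwa [Finset.card_insert_of_notMem hi]

def Van (x : Fin n → R) (M : Type) [AddCommGroup M] [Module R M] (k : ℕ) : Prop :=
  ∀ z : Finset (Fin n) → M, Sup k z → dk x z = 0 → ∃ u, z = dk x u

lemma exists_hom (x : Fin n → R) (k : ℕ) (z : Finset (Fin n) → M) (hz : Sup k z)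
    (hdz : dk x z = 0) (y : R) (hy : y ∈ Ideal.span (Set.range x)) :
    ∃ w : Finset (Fin n) → M, (∀ T, T.card + 1 ≠ k → w T = 0) ∧ dk x w = y • z := by
  induction hy using Submodule.span_induction with
  | mem y hy =>
    obtain ⟨j, rfl⟩ := hy
    refine ⟨io R j z, fun T hT => hz.io j T hT, ?_⟩
    have := dk_io x j z
    rwa [hdz, map_zero, add_zero] at this
  | zero => exact ⟨0, by simp, by simp⟩
  | add a b _ _ ha hb =>
    obtain ⟨w, hw, h⟩ := ha
    obtain ⟨w', hw', h'⟩ := hb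
    exact ⟨w + w', fun T hT => by simp [hw T hT, hw' T hT], by rw [map_add, h, h', add_smul]⟩
  | smul a b _ hb =>
    obtain ⟨w, hw, h⟩ := hb
    exact ⟨a • w, fun T hT => by simp [hw T hT], by rw [map_smul, h, smul_assoc]⟩

lemma mkQ_dk (x : Fin n → R) (P : Submodule R M) (φ : Finset (Fin n) → M) :
    dk x (fun T => P.mkQ (φ T)) = fun T => P.mkQ (dk x φ T) := by
  funext T; exact dk_map x P.mkQ φ T

lemma quot_zero (y : R) (m : M) : (y • (⊤ : Submodule R M)).mkQ m = 0 ↔ ∃ v, m = y • v := by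
  rw [Submodule.mkQ_apply, Submodule.Quotient.mk_eq_zero, Submodule.mem_smul_pointwise_iff_exists]
  simp [eq_comm]

lemma upper (x : Fin n → R) (rs : List R) : ∀ (k : ℕ) (M : Type) [AddCommGroup M] [Module R M],
    (∀ r ∈ rs, r ∈ Ideal.span (Set.range x)) →
    RingTheory.Sequence.IsWeaklyRegular M rs → ¬ Van x M k → rs.length ≤ k := by
  induction rs with
  | nil => intros; simp
  | cons y rs ih =>
    intro k M _ _ hrs hreg hV
    rw [RingTheory.Sequence.isWeaklyRegular_cons_iff] at hreg
    obtain ⟨hy, hreg⟩ := hreg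
    unfold Van at hV
    push Not at hV
    obtain ⟨z, hz, hdz, hne⟩ := hV
    obtain ⟨w, hw, hdw⟩ := exists_hom x k z hz hdz y (hrs y (by simp))
    rcases k with _ | k
    · exfalso
      have hw0 : w = 0 := by funext T; exact hw T (by omega)
      apply hne 0
      funext T
      apply hy
      have := congrFun hdw T
      simp only [hw0, map_zero] at this
      simpa using this.symm
    · have := ih k (QuotSMulTop y M) (fun r hr => hrs r (by simp [hr])) hreg ?_
      · simpa using this
      intro hV
      obtain ⟨u, hu⟩ := hV (fun T => (y • (⊤ : Submodule R M)).mkQ (w T))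
        (fun T hT => by simp only [hw T (by omega), map_zero]) (by
          rw [mkQ_dk, hdw]; funext T
          exact (quot_zero y _).2 ⟨z T, rfl⟩)
      choose u' hu' using fun T => (y • (⊤ : Submodule R M)).mkQ_surjective (u T)
      obtain rfl : (fun T => (y • (⊤ : Submodule R M)).mkQ (u' T)) = u := funext hu'
      rw [mkQ_dk] at hu
      have h3 : ∀ T, ∃ v, w T - dk x u' T = y • v := fun T => by
        rw [← quot_zero, map_sub, sub_eq_zero]; exact congrFun hu T
      choose v hv using h3
      have hv' : w = dk x u' + y • v := by funext T; simp [← hv T]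
      apply hne v
      rw [hv', map_add, dk_dk, zero_add, map_smul] at hdw
      funext T
      exact hy (congrFun hdw.symm T)

lemma exists_reg [IsNoetherianRing R] (x : Fin n → R) [Module.Finite R M] (hV : Van x M 0) :
    ∃ y ∈ Ideal.span (Set.range x), IsSMulRegular M y := by
  by_contra! hcon
  have hsub : ((Ideal.span (Set.range x) : Ideal R) : Set R) ⊆
      ⋃ p ∈ associatedPrimes R M, (p : Set R) := by
    rw [biUnion_associatedPrimes_eq_zero_divisors]
    intro y hy
    have := hcon y hy
    rw [isSMulRegular_iff_right_eq_zero_of_smul] at this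
    push Not at this
    obtain ⟨m, h1, h2⟩ := this
    exact ⟨m, h2, h1⟩
  rw [Ideal.subset_union_prime_finite (associatedPrimes.finite R M) ⊥ ⊥
    (fun i hi _ _ => hi.isPrime)] at hsub
  obtain ⟨p, hp, hle⟩ := hsub
  obtain ⟨hpp, m, hm⟩ := (isAssociatedPrime_iff.1 hp)
  have hxm : ∀ i, x i • m = 0 := fun i => by
    have : x i ∈ p := hle (Ideal.subset_span ⟨i, rfl⟩)
    rw [hm] at this
    simpa using this
  obtain ⟨u, hu⟩ := hV (fun T => if T = ∅ then m else 0)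
    (fun T hT => if_neg (by rintro rfl; simp at hT)) (by
      funext T
      rw [dk_apply]
      refine Finset.sum_eq_zero fun i _ => ?_
      rw [eo_apply]
      split_ifs
      · rw [smul_comm, hxm, smul_zero]
      · simp
      · simp)
  have h0 := congrFun hu ∅
  rw [dk_apply] at h0
  simp [eo_apply] at h0
  subst h0
  apply hpp.ne_top
  rw [hm]; simp

lemma van_quot (x : Fin n → R) (y : R) (hy : IsSMulRegular M y) (k : ℕ) (h0 : Van x M k)
    (h1 : Van x M (k+1)) : Van x (QuotSMulTop y M) k := by
  intro z hz hdz
  have : ∀ T, ∃ m, (y • (⊤ : Submodule R M)).mkQ m = z T ∧ (T.card ≠ k → m = 0) := by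
    intro T
    by_cases h : T.card = k
    · obtain ⟨m, hm⟩ := (y • (⊤ : Submodule R M)).mkQ_surjective (z T)
      exact ⟨m, hm, fun h' => absurd h h'⟩
    · exact ⟨0, by rw [hz T h, map_zero], fun _ => rfl⟩
  choose z' hz' hz'' using this
  obtain rfl : (fun T => (y • (⊤ : Submodule R M)).mkQ (z' T)) = z := funext hz'
  have hd := hz
  rw [mkQ_dk] at hdz
  have hs : Sup (k+1) (dk x z') := Sup.dk hz'' x
  have h3 : ∀ T, ∃ v, dk x z' T = y • v ∧ (T.card ≠ k + 1 → v = 0) := fun T => by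
    by_cases h : T.card = k + 1
    · obtain ⟨v, hv⟩ := (quot_zero y _).1 (congrFun hdz T)
      exact ⟨v, hv, fun h' => absurd h h'⟩
    · exact ⟨0, by rw [hs T h, smul_zero], fun _ => rfl⟩
  choose w hw hw' using h3
  have hw2 : dk x z' = y • w := funext hw
  have hdw : dk x w = 0 := by
    have := dk_dk x z'
    rw [hw2, map_smul] at this
    funext T
    apply hy
    simpa using congrFun this T
  obtain ⟨u, rfl⟩ := h1 w hw' hdw
  have hu' : ∃ u', Sup k u' ∧ dk x u' = dk x u := by
    refine ⟨fun T => if T.card = k then u T else 0, fun T hT => by simp [hT], ?_⟩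
    funext T
    by_cases h : T.card = k + 1
    · rw [dk_apply, dk_apply]
      refine Finset.sum_congr rfl fun i _ => ?_
      rw [eo_apply, eo_apply]
      split_ifs with h1 h2
      · rfl
      · rw [Finset.card_erase_of_mem h1] at h2; omega
      · rfl
    · rw [hw' T h]
      exact Sup.dk (k := k) (fun T hT => by simp [hT]) x T h
  obtain ⟨u', hu', hdu⟩ := hu'
  obtain ⟨v, hv⟩ := h0 (z' - y • u') (fun T hT => by simp [hz'' T hT, hu' T hT]) (by
    rw [map_sub, map_smul, hdu, hw2, sub_self])
  refine ⟨fun T => (y • (⊤ : Submodule R M)).mkQ (v T), ?_⟩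
  rw [mkQ_dk, ← hv]
  funext T
  have : (y • (⊤ : Submodule R M)).mkQ (y • u' T) = 0 := (quot_zero y _).2 ⟨_, rfl⟩
  rw [Pi.sub_apply, map_sub, Pi.smul_apply, this, sub_zero]

lemma lower [IsNoetherianRing R] (x : Fin n → R) (k : ℕ) :
    ∀ (M : Type) [AddCommGroup M] [Module R M] [Module.Finite R M], (∀ j < k, Van x M j) →
    ∃ rs : List R, rs.length = k ∧ (∀ r ∈ rs, r ∈ Ideal.span (Set.range x)) ∧
      RingTheory.Sequence.IsWeaklyRegular M rs := by
  induction k with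
  | zero => intro M _ _ _ _; exact ⟨[], by simp, by simp, RingTheory.Sequence.IsWeaklyRegular.nil R M⟩
  | succ k ih =>
    intro M _ _ _ h
    obtain ⟨y, hy, hreg⟩ := exists_reg x (h 0 (by omega))
    obtain ⟨rs, h1, h2, h3⟩ := ih (QuotSMulTop y M)
      (fun j hj => van_quot x y hreg j (h j (by omega)) (h (j+1) (by omega)))
    refine ⟨y :: rs, by simp [h1], ?_, ?_⟩
    · intro r hr; rcases List.mem_cons.1 hr with rfl | hr
      exacts [hy, h2 r hr]
    · rw [RingTheory.Sequence.isWeaklyRegular_cons_iff]; exact ⟨hreg, h3⟩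

end Kos

section Mon
variable {n : ℕ} {K : Type} [Field K]

noncomputable def ind (F : Finset (Fin n)) : Fin n →₀ ℕ := ∑ i ∈ F, Finsupp.single i 1

lemma ind_apply (F : Finset (Fin n)) (j : Fin n) : ind F j = if j ∈ F then 1 else 0 := by
  simp [ind, Finsupp.finsetSum_apply, Finsupp.single_apply]

lemma ind_support (F : Finset (Fin n)) : (ind F).support = F := by
  ext j; simp [ind_apply]

lemma sqMon_eq (F : Finset (Fin n)) : sqMon K F = monomial (ind F) 1 := by
  rw [sqMon, ind, monomial_sum_one]; rfl

lemma ind_le (F : Finset (Fin n)) (m : Fin n →₀ ℕ) : ind F ≤ m ↔ F ⊆ m.support := by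
  constructor
  · intro h i hi
    have := h i
    rw [ind_apply, if_pos hi] at this
    rw [Finsupp.mem_support_iff]; omega
  · intro h i
    rw [ind_apply]
    split_ifs with hi
    · have := Finsupp.mem_support_iff.1 (h hi); omega
    · omega

lemma mem_sq (G : Set (Finset (Fin n))) (p : MvPolynomial (Fin n) K) :
    p ∈ Ideal.span (sqMon K '' G) ↔ ∀ m, coeff m p ≠ 0 → ∃ F ∈ G, F ⊆ m.support := by
  have : sqMon K '' G = (fun s => monomial s (1:K)) '' (ind '' G) := by
    rw [Set.image_image]; simp only [sqMon_eq]
  rw [this, mem_ideal_span_monomial_image]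
  simp [ind_le]

noncomputable def Dv (i : Fin n) : MvPolynomial (Fin n) K →+ MvPolynomial (Fin n) K where
  toFun p := X i * (p.divMonomial (Finsupp.single i 2))
  map_zero' := by rw [zero_divMonomial, mul_zero]
  map_add' p q := by rw [add_divMonomial, mul_add]

lemma coeff_Dv (i : Fin n) (p : MvPolynomial (Fin n) K) (m) :
    coeff m (Dv i p) = if i ∈ m.support then coeff (m + Finsupp.single i 1) p else 0 := by
  change coeff m (X i * (p.divMonomial (Finsupp.single i 2))) = _
  rw [coeff_X_mul']
  split_ifs with h
  · rw [coeff_divMonomial]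
    congr 1
    ext j
    rw [Finsupp.mem_support_iff] at h
    by_cases hj : i = j
    · subst hj; simp; omega
    · simp [hj]
  · rfl

lemma Dv_X_ne (i l : Fin n) (h : l ≠ i) (p : MvPolynomial (Fin n) K) :
    Dv i (X l * p) = X l * Dv i p := by
  ext m
  rw [coeff_Dv, coeff_X_mul', coeff_X_mul', coeff_Dv]
  have e : m - Finsupp.single l 1 + Finsupp.single i 1 = m + Finsupp.single i 1 - Finsupp.single l 1 := by
    ext j
    by_cases hj : l = j
    · subst hj; simp [h.symm]
    · simp [hj]
  rw [e]
  simp only [Finsupp.mem_support_iff, Finsupp.coe_add, Pi.add_apply, Finsupp.coe_tsub, Pi.sub_apply,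
    Finsupp.single_eq_of_ne h, Finsupp.single_eq_of_ne h.symm, tsub_zero, add_zero]
  split_ifs <;> rfl

lemma coeff_Dv_X (i : Fin n) (p : MvPolynomial (Fin n) K) (m) :
    coeff m (Dv i (X i * p)) = if i ∈ m.support then coeff m p else 0 := by
  rw [coeff_Dv, coeff_X_mul']
  simp

lemma coeff_X_Dv (i : Fin n) (p : MvPolynomial (Fin n) K) (m) :
    coeff m (X i * Dv i p) = 0 ∨ coeff m (X i * Dv i p) = coeff m p := by
  rw [coeff_X_mul']
  split_ifs with h
  · rw [coeff_Dv]
    split_ifs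
    · right
      congr 1
      ext j
      rw [Finsupp.mem_support_iff] at h
      by_cases hj : i = j
      · subst hj; simp; omega
      · simp [hj]
    · left; rfl
  · left; rfl

lemma Dv_mem (G : Set (Finset (Fin n))) (i : Fin n) (p : MvPolynomial (Fin n) K)
    (hp : p ∈ Ideal.span (sqMon K '' G)) : Dv i p ∈ Ideal.span (sqMon K '' G) := by
  rw [mem_sq] at hp ⊢
  intro m hm
  rw [coeff_Dv] at hm
  split_ifs at hm with h
  · obtain ⟨F, hF, hs⟩ := hp _ hm
    refine ⟨F, hF, hs.trans ?_⟩
    intro j hj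
    by_cases hji : j = i
    · rwa [hji]
    · simpa [Finsupp.single_eq_of_ne hji] using hj
  · exact absurd rfl hm

noncomputable abbrev XX (n : ℕ) (K : Type) [Field K] : Fin n → MvPolynomial (Fin n) K := X

abbrev CS (n : ℕ) (K : Type) [Field K] := Finset (Fin n) → MvPolynomial (Fin n) K

lemma eo_mem {R M : Type} [CommRing R] [AddCommGroup M] [Module R M] (P : Submodule R M) (i : Fin n)
    (z : Finset (Fin n) → M) (hz : ∀ T, z T ∈ P) (T) : eo R i z T ∈ P := by
  rw [eo_apply]; split_ifs
  · exact zsmul_mem (hz _) _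
  · exact zero_mem _

lemma io_mem {R M : Type} [CommRing R] [AddCommGroup M] [Module R M] (P : Submodule R M) (i : Fin n)
    (z : Finset (Fin n) → M) (hz : ∀ T, z T ∈ P) (T) : io R i z T ∈ P := by
  rw [io_apply]; split_ifs
  · exact zero_mem _
  · exact zsmul_mem (hz _) _

lemma dk_mem {R M : Type} [CommRing R] [AddCommGroup M] [Module R M] (P : Submodule R M)
    (x : Fin n → R)
    (z : Finset (Fin n) → M) (hz : ∀ T, z T ∈ P) (T) : dk x z T ∈ P := by
  rw [dk_apply]
  exact sum_mem fun i _ => P.smul_mem _ (eo_mem P i z hz T)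

noncomputable def hD (i : Fin n) (z : CS n K) : CS n K :=
  fun T => Dv i (io (MvPolynomial (Fin n) K) i z T)

lemma hD_homotopy (i : Fin n) (z : CS n K) (T) :
    dk (XX n K) (hD i z) T + hD i (dk (XX n K) z) T =
      if i ∈ T then X i * Dv i (z T) else Dv i (X i * z T) := by
  have h1 : dk (XX n K) (hD i z) T = ∑ l, X l * Dv i (eo (MvPolynomial (Fin n) K) l (io (MvPolynomial (Fin n) K) i z) T) := by
    rw [dk_apply]
    refine Finset.sum_congr rfl fun l _ => ?_
    rw [smul_eq_mul, ← eo_map]; rfl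
  have h2 : hD i (dk (XX n K) z) T = ∑ l, Dv i (X l * io (MvPolynomial (Fin n) K) i (eo (MvPolynomial (Fin n) K) l z) T) := by
    unfold hD
    rw [dk_eq, map_sum, Finset.sum_apply, map_sum]
    refine Finset.sum_congr rfl fun l _ => ?_
    rw [map_smul, Pi.smul_apply, smul_eq_mul]
  rw [h1, h2, ← Finset.sum_add_distrib, Finset.sum_eq_single i]
  · rw [eo_io_self, io_eo_self]
    split_ifs <;> simp
  · intro l _ hl
    rw [Dv_X_ne i l hl, ← mul_add, ← map_add]
    have := congrFun (eo_io (R := MvPolynomial (Fin n) K) l i hl z) T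
    rw [Pi.add_apply] at this
    rw [this]; simp
  · simp

lemma van_step (GI GJ : Set (Finset (Fin n))) (j : ℕ) (z : CS n K)
    (hs : Sup j z)
    (hI : ∀ T, z T ∈ Ideal.span (sqMon K '' GI)) (hJ : ∀ T, dk (XX n K) z T ∈ Ideal.span (sqMon K '' GJ))
    (A : Finset (Fin n)) :
    ∃ u z' : CS n K, (∀ T, u T ∈ Ideal.span (sqMon K '' GI)) ∧
      (∀ T, z' T ∈ Ideal.span (sqMon K '' GI)) ∧ Sup j z' ∧
      (∀ T, dk (XX n K) z' T ∈ Ideal.span (sqMon K '' GJ)) ∧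
      (∀ T, z T - dk (XX n K) u T - z' T ∈ Ideal.span (sqMon K '' GJ)) ∧
      (∀ T m, coeff m (z' T) ≠ 0 → ∀ i ∈ A, i ∈ m.support → i ∈ T) := by
  induction A using Finset.induction_on with
  | empty => exact ⟨0, z, by simp, hI, hs, hJ, by simp, by simp⟩
  | insert i A hi ih =>
    obtain ⟨u, z', hu, hI', hs', hJ', hd, hA⟩ := ih
    have key := hD_homotopy i z'
    set q : CS n K := fun T => if i ∈ T then X i * Dv i (z' T) else Dv i (X i * z' T) with hq
    have key' : dk (XX n K) (hD i z') + hD i (dk (XX n K) z') = q := funext key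
    have hhI : ∀ T, hD i z' T ∈ Ideal.span (sqMon K '' GI) := fun T =>
      Dv_mem _ _ _ (io_mem (R := MvPolynomial (Fin n) K) _ i z' hI' T)
    have hhJ : ∀ T, hD i (dk (XX n K) z') T ∈ Ideal.span (sqMon K '' GJ) := fun T =>
      Dv_mem _ _ _ (io_mem (R := MvPolynomial (Fin n) K) _ i _ hJ' T)
    refine ⟨u + hD i z', z' - q, ?_, ?_, ?_, ?_, ?_, ?_⟩
    · exact fun T => add_mem (hu T) (hhI T)
    · intro T
      refine sub_mem (hI' T) ?_
      rw [hq]; simp only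
      split_ifs
      · exact Ideal.mul_mem_left _ _ (Dv_mem _ _ _ (hI' T))
      · exact Dv_mem _ _ _ (Ideal.mul_mem_left _ _ (hI' T))
    · intro T hT
      rw [Pi.sub_apply, hq]; simp [hs' T hT]
    · intro T
      rw [← key', map_sub, map_add, dk_dk, zero_add]
      exact sub_mem (hJ' T) (dk_mem (R := MvPolynomial (Fin n) K) _ (XX n K) _ hhJ T)
    · intro T
      have : z T - dk (XX n K) (u + hD i z') T - (z' - q) T
          = (z T - dk (XX n K) u T - z' T) + hD i (dk (XX n K) z') T := by
        rw [← key', map_add]; simp only [Pi.sub_apply, Pi.add_apply]; ring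
      rw [this]
      exact add_mem (hd T) (hhJ T)
    · intro T m hm l hl hlm
      rw [Pi.sub_apply, coeff_sub] at hm
      have hm' : coeff m (z' T) ≠ 0 := by
        intro h0
        apply hm
        rw [h0, hq]; simp only
        split_ifs
        · rcases coeff_X_Dv i (z' T) m with h | h
          · rw [h]; simp
          · rw [h, h0]; simp
        · rw [coeff_Dv_X, h0]; simp
      rcases Finset.mem_insert.1 hl with rfl | hl
      · by_contra hlT
        apply hm
        rw [hq]; simp only
        rw [if_neg hlT, coeff_Dv_X, if_pos hlm, sub_self]
      · exact hA T m hm' l hl hlm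

lemma van_pair (GI GJ : Set (Finset (Fin n))) (d j : ℕ) (hj : j < d) (hG : ∀ F ∈ GI, F.card = d)
    (z : CS n K) (hs : Sup j z)
    (hI : ∀ T, z T ∈ Ideal.span (sqMon K '' GI)) (hJ : ∀ T, dk (XX n K) z T ∈ Ideal.span (sqMon K '' GJ)) :
    ∃ u : CS n K, (∀ T, u T ∈ Ideal.span (sqMon K '' GI)) ∧
      (∀ T, z T - dk (XX n K) u T ∈ Ideal.span (sqMon K '' GJ)) := by
  obtain ⟨u, z', hu, hI', hs', hJ', hd, hA⟩ := van_step GI GJ j z hs hI hJ Finset.univ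
  refine ⟨u, hu, fun T => ?_⟩
  have : z' T = 0 := by
    by_cases hT : T.card = j
    · ext m
      rw [coeff_zero]
      by_contra hm
      obtain ⟨F, hF, hFm⟩ := (mem_sq _ _).1 (hI' T) m hm
      have h2 : F ⊆ T := fun i hi => hA T m hm i (Finset.mem_univ _) (hFm hi)
      have := Finset.card_le_card h2
      rw [hG F hF] at this
      omega
    · exact hs' T hT
  have h3 := hd T
  rwa [this, sub_zero] at h3

lemma coeff_low (GI : Set (Finset (Fin n))) (d : ℕ) (hG : ∀ F ∈ GI, F.card = d)
    (r : MvPolynomial (Fin n) K) (hr : r ∈ maxGraded K n) (T : Finset (Fin n)) (hT : T.card = d) :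
    ∀ p ∈ Ideal.span (sqMon K '' GI), coeff (ind T) (r * p) = 0 := by
  induction hr using Submodule.span_induction with
  | mem y hy =>
    obtain ⟨i, rfl⟩ := hy
    intro p hp
    rw [coeff_X_mul', ind_support]
    split_ifs with h
    · by_contra hne
      obtain ⟨F, hF, hs⟩ := (mem_sq _ _).1 hp _ hne
      have h2 : F ⊆ T.erase i := by
        intro l hl
        have := hs hl
        rw [Finsupp.mem_support_iff, Finsupp.coe_tsub, Pi.sub_apply, ind_apply] at this
        rw [Finset.mem_erase]
        constructor
        · rintro rfl; simp [h] at this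
        · by_contra hlT; simp [hlT] at this
      have := Finset.card_le_card h2
      rw [hG F hF, Finset.card_erase_of_mem h] at this
      have := Finset.card_pos.2 ⟨i, h⟩
      omega
    · rfl
  | zero => simp
  | add a b _ _ ha hb => intro p hp; rw [add_mul, coeff_add, ha p hp, hb p hp, add_zero]
  | smul a b _ hb =>
    intro p hp
    rw [smul_eq_mul, mul_comm a, mul_assoc]
    exact hb _ (Ideal.mul_mem_left _ _ hp)

lemma coeff_J (GJ : Set (Finset (Fin n))) (d : ℕ) (hG : ∀ F ∈ GJ, F.card = d + 1)
    (T : Finset (Fin n)) (hT : T.card = d) (p : MvPolynomial (Fin n) K)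
    (hp : p ∈ Ideal.span (sqMon K '' GJ)) : coeff (ind T) p = 0 := by
  by_contra h
  obtain ⟨F, hF, hs⟩ := (mem_sq _ _).1 hp _ h
  rw [ind_support] at hs
  have := Finset.card_le_card hs
  rw [hG F hF] at this
  omega

end Mon

section Fin8
variable {n : ℕ} {K : Type} [Field K]

lemma dk_coe (I : Ideal (MvPolynomial (Fin n) K)) (z : Finset (Fin n) → I) (T) :
    dk (XX n K) (fun T => (z T : MvPolynomial (Fin n) K)) T = (dk (XX n K) z T : I) :=
  dk_map (XX n K) I.subtype z T

lemma quot_van (GI GJ : Set (Finset (Fin n))) (d j : ℕ) (hj : j < d) (hG : ∀ F ∈ GI, F.card = d) :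
    Van (XX n K) (idealQuot (Ideal.span (sqMon K '' GI)) (Ideal.span (sqMon K '' GJ))) j := by
  set I := Ideal.span (sqMon K '' GI)
  set J := Ideal.span (sqMon K '' GJ)
  set P := Submodule.comap I.subtype (J : Submodule _ _)
  intro z hz hdz
  have : ∀ T, ∃ m, P.mkQ m = z T ∧ (T.card ≠ j → m = 0) := by
    intro T
    by_cases h : T.card = j
    · obtain ⟨m, hm⟩ := P.mkQ_surjective (z T)
      exact ⟨m, hm, fun h' => absurd h h'⟩
    · exact ⟨0, by rw [hz T h, map_zero], fun _ => rfl⟩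
  choose z' hz' hz'' using this
  obtain rfl : (fun T => P.mkQ (z' T)) = z := funext hz'
  rw [mkQ_dk] at hdz
  obtain ⟨u, hu, hzu⟩ := van_pair GI GJ d j hj hG (fun T => (z' T : MvPolynomial (Fin n) K))
    (fun T hT => by simp [hz'' T hT]) (fun T => (z' T).2) (fun T => by
      rw [dk_coe]
      have := congrFun hdz T
      simp only [Submodule.mkQ_apply, Pi.zero_apply, Submodule.Quotient.mk_eq_zero] at this
      exact this)
  refine ⟨fun T => P.mkQ ⟨u T, hu T⟩, ?_⟩
  rw [mkQ_dk]
  funext T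
  rw [← sub_eq_zero, ← map_sub, Submodule.mkQ_apply, Submodule.Quotient.mk_eq_zero]
  have h3 := hzu T
  have h4 := dk_coe I (fun T => ⟨u T, hu T⟩) T
  rw [h4] at h3
  exact h3

lemma not_van (GI GJ : Set (Finset (Fin n))) (d : ℕ) (hG : ∀ F ∈ GI, F.card = d)
    (hGJ : ∀ F ∈ GJ, F.card = d + 1) (c : Finset (Fin n) → K)
    (hc : ∀ F, c F ≠ 0 → F ∈ GI) (hc0 : ∃ F, c F ≠ 0)
    (hdc : ∀ T, T.card = d + 1 → sqMon K T ∈ Ideal.span (sqMon K '' GI) →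
      sqMon K T ∉ Ideal.span (sqMon K '' GJ) → dk (fun _ => (1:K)) c T = 0) :
    ¬ Van (XX n K) (idealQuot (Ideal.span (sqMon K '' GI)) (Ideal.span (sqMon K '' GJ))) d := by
  intro hV
  set I := Ideal.span (sqMon K '' GI) with hIdef
  set J := Ideal.span (sqMon K '' GJ) with hJdef
  set P := Submodule.comap I.subtype (J : Submodule _ _)
  have hcs : Sup d c := fun T hT => by
    by_contra h; exact hT (hG T (hc T h))
  have hzI : ∀ T, C (c T) * sqMon K T ∈ I := fun T => by
    by_cases h : c T = 0
    · simp [h]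
    · exact Ideal.mul_mem_left _ _ (Ideal.subset_span ⟨T, hc T h, rfl⟩)
  let z : Finset (Fin n) → I := fun T => ⟨C (c T) * sqMon K T, hzI T⟩
  have hdz : ∀ T, ((dk (XX n K) z T : I) : MvPolynomial (Fin n) K) =
      C (dk (fun _ => (1:K)) c T) * sqMon K T := by
    intro T
    rw [← dk_coe, dk_apply, dk_apply, map_sum, Finset.sum_mul]
    refine Finset.sum_congr rfl fun i _ => ?_
    rw [eo_apply, eo_apply]
    split_ifs with hi
    · rw [one_smul, map_zsmul, smul_comm, smul_mul_assoc]
      congr 1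
      simp only [z, smul_eq_mul]
      rw [mul_left_comm]
      congr 1
      exact Finset.mul_prod_erase T X hi
    · simp
  obtain ⟨u, hu⟩ := hV (fun T => P.mkQ (z T)) (fun T hT => by
      have : z T = 0 := by apply Subtype.ext; simp [z, hcs T hT]
      simp only [this, map_zero]) (by
    rw [mkQ_dk]; funext T
    rw [Pi.zero_apply, Submodule.mkQ_apply, Submodule.Quotient.mk_eq_zero]
    change ((dk (XX n K) z T : I) : MvPolynomial (Fin n) K) ∈ J
    have hmem := (dk (XX n K) z T).2
    rw [hdz] at hmem ⊢
    by_cases ha : dk (fun _ => (1:K)) c T = 0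
    · simp [ha]
    have hcard : T.card = d + 1 := by
      by_contra h; exact ha (hcs.dk _ T h)
    by_contra hJ
    apply ha
    apply hdc T hcard
    · have := Ideal.mul_mem_left I (C (dk (fun _ => (1:K)) c T)⁻¹) hmem
      rwa [← mul_assoc, ← C_mul, inv_mul_cancel₀ ha, C_1, one_mul] at this
    · intro h; exact hJ (Ideal.mul_mem_left _ _ h))
  choose u' hu' using fun T => P.mkQ_surjective (u T)
  obtain rfl : (fun T => P.mkQ (u' T)) = u := funext hu'
  rw [mkQ_dk] at hu
  obtain ⟨F, hF⟩ := hc0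
  have h := congrFun hu F
  rw [← sub_eq_zero, ← map_sub, Submodule.mkQ_apply, Submodule.Quotient.mk_eq_zero] at h
  have h : (C (c F) * sqMon K F - ((dk (XX n K) u' F : I) : MvPolynomial (Fin n) K)) ∈ J := h
  have hFd := hG F (hc F hF)
  have h1 := coeff_J GJ d hGJ F hFd _ h
  have h2 : coeff (ind F) ((dk (XX n K) u' F : I) : MvPolynomial (Fin n) K) = 0 := by
    rw [← dk_coe, dk_apply, coeff_sum]
    refine Finset.sum_eq_zero fun i _ => ?_
    exact coeff_low GI d hG (X i) (Ideal.subset_span ⟨i, rfl⟩) F hFd _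
      (eo_mem (R := MvPolynomial (Fin n) K) I i _ (fun T => (u' T).2) F)
  rw [coeff_sub, h2, sub_zero, coeff_C_mul, sqMon_eq, coeff_monomial, if_pos rfl, mul_one] at h1
  exact hF h1

lemma top_ne (GI GJ : Set (Finset (Fin n))) (d : ℕ) (hG : ∀ F ∈ GI, F.card = d)
    (hGJ : ∀ F ∈ GJ, F.card = d + 1) (F : Finset (Fin n)) (hF : F ∈ GI)
    (rs : List (MvPolynomial (Fin n) K)) (hrs : ∀ r ∈ rs, r ∈ maxGraded K n) :
    (⊤ : Submodule (MvPolynomial (Fin n) K)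
      (idealQuot (Ideal.span (sqMon K '' GI)) (Ideal.span (sqMon K '' GJ)))) ≠
      Ideal.ofList rs • ⊤ := by
  intro htop
  set I := Ideal.span (sqMon K '' GI) with hIdef
  set J := Ideal.span (sqMon K '' GJ) with hJdef
  set P := Submodule.comap I.subtype (J : Submodule _ _)
  have hle : Ideal.ofList rs ≤ maxGraded K n := Ideal.span_le.2 hrs
  have key : ∀ q : idealQuot I J, q ∈ Ideal.ofList rs • (⊤ : Submodule (MvPolynomial (Fin n) K) (idealQuot I J)) →
      ∃ p : I, P.mkQ p = q ∧ coeff (ind F) (p : MvPolynomial (Fin n) K) = 0 := by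
    intro q hq
    induction hq using Submodule.smul_induction_on' with
    | smul r hr q _ =>
      obtain ⟨p, rfl⟩ := P.mkQ_surjective q
      exact ⟨r • p, map_smul _ _ _, coeff_low GI d hG r (hle hr) F (hG F hF) p p.2⟩
    | add a _ b _ ha hb =>
      obtain ⟨p, h1, h2⟩ := ha
      obtain ⟨p', h1', h2'⟩ := hb
      exact ⟨p + p', by rw [map_add, h1, h1'], by simp [h2, h2']⟩
  obtain ⟨p, hp, hp0⟩ := key (P.mkQ ⟨sqMon K F, Ideal.subset_span ⟨F, hF, rfl⟩⟩)
    (htop ▸ Submodule.mem_top)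
  rw [← sub_eq_zero, ← map_sub, Submodule.mkQ_apply, Submodule.Quotient.mk_eq_zero] at hp
  have h : ((p : MvPolynomial (Fin n) K) - sqMon K F) ∈ J := hp
  have h1 := coeff_J GJ d hGJ F (hG F hF) _ h
  rw [coeff_sub, hp0, sqMon_eq, coeff_monomial, if_pos rfl] at h1
  simp at h1

end Fin8

/-- Proposition 1.12. -/
theorem stmt_8 (n : ℕ) (K : Type) [Field K] (d : ℕ) (hd : 0 < d)
    (I J : Ideal (MvPolynomial (Fin n) K)) (hJ0 : J ≠ ⊥) (hJI : J < I)
    (r : ℕ) (hr : 0 < r) (f : Fin r → Finset (Fin n)) (hfinj : Function.Injective f)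
    (hfd : ∀ i, (f i).card = d)
    (hIgen : I = Ideal.span (Set.range fun i => sqMon K (f i)))
    (hJgen : GenBySqMonOfDeg K (fun k => k = d + 1) J)
    (s : ℕ)
    (hs : s = Set.ncard {T : Finset (Fin n) |
      T.card = d + 1 ∧ sqMon K T ∈ I ∧ sqMon K T ∉ J})
    (hrs : s < r) (hs2 : s = 2) :
    moduleDepth (maxGraded K n) (idealQuot I J) = (d : ℕ∞) := by

  obtain ⟨GJ, hGJ, rfl⟩ := hJgen
  have hI : I = Ideal.span (sqMon K '' (Set.range f)) := by
    rw [hIgen, ← Set.range_comp]; rfl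
  clear hIgen
  subst hI
  have hG : ∀ F ∈ Set.range f, F.card = d := by rintro _ ⟨i, rfl⟩; exact hfd i
  obtain ⟨c, hc, hc0, hdc⟩ : ∃ c : Finset (Fin n) → K, (∀ F, c F ≠ 0 → F ∈ Set.range f) ∧
      (∃ F, c F ≠ 0) ∧ ∀ T, T.card = d + 1 → sqMon K T ∈ Ideal.span (sqMon K '' Set.range f) →
      sqMon K T ∉ Ideal.span (sqMon K '' GJ) → dk (fun _ => (1:K)) c T = 0 := by
    set B := {T : Finset (Fin n) | T.card = d + 1 ∧ sqMon K T ∈ Ideal.span (sqMon K '' Set.range f)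
      ∧ sqMon K T ∉ Ideal.span (sqMon K '' GJ)} with hB
    have : Fintype B := Fintype.ofFinite B
    let L : (Fin r → K) →ₗ[K] (B → K) :=
      (LinearMap.funLeft K K (Subtype.val : B → Finset (Fin n))) ∘ₗ
        (dk (fun _ => (1:K))) ∘ₗ (Function.ExtendByZero.linearMap K f)
    have hker : LinearMap.ker L ≠ ⊥ := by
      apply LinearMap.ker_ne_bot_of_finrank_lt
      rw [Module.finrank_fintype_fun_eq_card, Module.finrank_fintype_fun_eq_card, Fintype.card_fin,
        ← Nat.card_eq_fintype_card, Nat.card_coe_set_eq]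
      omega
    obtain ⟨c, hcL, hcne⟩ := Submodule.exists_mem_ne_zero_of_ne_bot hker
    refine ⟨Function.extend f c 0, ?_, ?_, ?_⟩
    · intro F hF
      by_contra h
      apply hF
      rw [Function.extend_apply' _ _ _ (by simpa using h)]; rfl
    · obtain ⟨k, hk⟩ := Function.ne_iff.1 hcne
      exact ⟨f k, by rwa [hfinj.extend_apply]⟩
    · intro T h1 h2 h3
      have := congrFun (LinearMap.mem_ker.1 hcL) ⟨T, h1, h2, h3⟩
      exact this
  have hnv := not_van (Set.range f) GJ d hG hGJ c hc hc0 hdc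
  apply le_antisymm
  · apply sSup_le
    rintro k ⟨rs, rfl, hrs, hreg⟩
    exact_mod_cast upper (XX n K) rs d _ hrs hreg.toIsWeaklyRegular hnv
  · obtain ⟨rs, hl, hrs, hreg⟩ := lower (R := MvPolynomial (Fin n) K) (XX n K) d
      (idealQuot (Ideal.span (sqMon K '' Set.range f)) (Ideal.span (sqMon K '' GJ)))
      (fun j hj => quot_van (Set.range f) GJ d j hj hG)
    apply le_sSup
    exact ⟨rs, by rw [hl], hrs, hreg, top_ne (Set.range f) GJ d hG hGJ (f ⟨0, hr⟩) ⟨_, rfl⟩ rs hrs⟩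
end
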